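/- Let −1 < k < 0 and for each n let X_1,…,X_n be i.i.d. random variables from the Generalized Pareto distribution with shape k and scale 1, and let τ_n = X̄_n / X_(n). Then for every t > 0, P( n^{−k} · τ_n ≤ t ) converges, as n → ∞, to 1 − exp( − ( t·(k+1)/(−k) )^{−1/k} ); that is, n^{−k}·τ_n converges in distribution to a Weibull random variable with shape parameter −1/k and scale parameter −k/(k+1). -/

import Mathlib

open MeasureTheory ProbabilityTheory Filter

/-- The density of the Generalized Pareto distribution with shape `k` and scale `1`:
`(1 − k·x)^{(1−k)/k}` on `[0, 1/k]` for `k > 0`, on `[0, ∞)` for `k < 0`, and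
the `Exponential(1)` density `e^{−x}` for `k = 0`. -/
noncomputable def gpdPdf (k x : ℝ) : ℝ :=
  if k = 0 then (if 0 ≤ x then Real.exp (-x) else 0)
  else if 0 ≤ x ∧ (k ≤ 0 ∨ x ≤ 1 / k) then (1 - k * x) ^ ((1 - k) / k) else 0

/-- The Generalized Pareto distribution with shape `k` and scale `1`. -/
noncomputable def gpdMeasure (k : ℝ) : Measure ℝ :=
  volume.withDensity fun x => ENNReal.ofReal (gpdPdf k x)

/-- The joint law of an i.i.d. sample of size `n` from the GPD with shape `k`, scale `1`. -/
noncomputable def iidGPD (n : ℕ) (k : ℝ) : Measure (Fin n → ℝ) :=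
  Measure.pi fun _ => gpdMeasure k

/-- Sample maximum. -/
noncomputable def sampleMax {n : ℕ} (x : Fin n → ℝ) : ℝ := ⨆ i, x i

/-- Empirical mean. -/
noncomputable def sampleMean {n : ℕ} (x : Fin n → ℝ) : ℝ := (∑ i, x i) / n

/-- The mean/max statistic `τ_n`. -/
noncomputable def tau {n : ℕ} (x : Fin n → ℝ) : ℝ := sampleMean x / sampleMax x

lemma gpdPdf_eq_indicator {k : ℝ} (hk : k < 0) :
    gpdPdf k = (Set.Ici 0).indicator fun x => (1 - k * x) ^ ((1 - k) / k) := by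
  ext x
  by_cases hx : 0 ≤ x <;> simp [gpdPdf, hk.ne, hk.le, hx]

lemma gpdMeasure_eq_restrict_withDensity {k : ℝ} (hk : k < 0) :
    gpdMeasure k = (volume.restrict (Set.Ici 0)).withDensity
      fun x => ENNReal.ofReal ((1 - k * x) ^ ((1 - k) / k)) := by
  rw [gpdMeasure, ← withDensity_indicator measurableSet_Ici, gpdPdf_eq_indicator hk]
  congr 1
  ext x
  by_cases hx : 0 ≤ x <;> simp [hx]

lemma tendsto_one_sub_mul_rpow_atTop {k p : ℝ} (hk : k < 0) (hp : p < 0) :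
    Tendsto (fun x : ℝ => (1 - k * x) ^ p) atTop (nhds 0) := by
  have hu : Tendsto (fun x : ℝ => 1 - k * x) atTop atTop := by
    simpa [sub_eq_add_neg] using
      tendsto_atTop_add_const_left _ (1 : ℝ) (tendsto_id.const_mul_atTop (neg_pos.2 hk))
  simpa [Function.comp_def] using (tendsto_rpow_neg_atTop (neg_pos.2 hp)).comp hu

lemma hasDerivAt_one_sub_mul_rpow {k x : ℝ} (p : ℝ) (hx : 0 < 1 - k * x) :
    HasDerivAt (fun x : ℝ => (1 - k * x) ^ p) (-k * p * (1 - k * x) ^ (p - 1)) x := by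
  have h : HasDerivAt (fun x : ℝ => 1 - k * x) (-k) x := by
    simpa using ((hasDerivAt_id x).const_mul k).const_sub 1
  exact h.rpow_const (Or.inl hx.ne')

lemma setLIntegral_Ici_gpd {k y : ℝ} (hk : k < 0) (hy : 0 ≤ y) :
    ∫⁻ x in Set.Ici y, ENNReal.ofReal ((1 - k * x) ^ ((1 - k) / k)) =
      ENNReal.ofReal ((1 - k * y) ^ (1 / k)) := by
  have hpos : ∀ x ∈ Set.Ici y, 0 < 1 - k * x := fun x hx => by
    nlinarith [hy.trans (Set.mem_Ici.1 hx)]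
  have hderiv : ∀ x ∈ Set.Ici y, HasDerivAt (fun x : ℝ => -(1 - k * x) ^ (1 / k))
      ((1 - k * x) ^ ((1 - k) / k)) x := fun x hx => by
    refine (hasDerivAt_one_sub_mul_rpow (1 / k) (hpos x hx)).neg.congr_deriv ?_
    rw [sub_div, div_self hk.ne, neg_mul, mul_one_div_cancel hk.ne]
    ring
  have hnn : ∀ x ∈ Set.Ioi y, 0 ≤ (1 - k * x) ^ ((1 - k) / k) := fun x hx =>
    Real.rpow_nonneg (hpos x (Set.Ioi_subset_Ici_self hx)).le _
  have hlim : Tendsto (fun x : ℝ => -(1 - k * x) ^ (1 / k)) atTop (nhds 0) := by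
    simpa using (tendsto_one_sub_mul_rpow_atTop hk (one_div_neg.2 hk)).neg
  rw [setLIntegral_congr Ioi_ae_eq_Ici.symm, ← ofReal_integral_eq_lintegral_ofReal
    (integrableOn_Ioi_deriv_of_nonneg' hderiv hnn hlim)
    ((ae_restrict_iff' measurableSet_Ioi).2 (ae_of_all _ hnn)),
    integral_Ioi_of_hasDerivAt_of_nonneg' hderiv hnn hlim]
  simp

lemma gpdMeasure_Ici {k y : ℝ} (hk : k < 0) (hy : 0 ≤ y) :
    gpdMeasure k (Set.Ici y) = ENNReal.ofReal ((1 - k * y) ^ (1 / k)) := by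
  rw [gpdMeasure_eq_restrict_withDensity hk, withDensity_apply _ measurableSet_Ici,
    Measure.restrict_restrict measurableSet_Ici,
    Set.inter_eq_left.2 (Set.Ici_subset_Ici.2 hy), setLIntegral_Ici_gpd hk hy]

lemma isProbabilityMeasure_gpdMeasure {k : ℝ} (hk : k < 0) :
    IsProbabilityMeasure (gpdMeasure k) := by
  constructor
  rw [gpdMeasure_eq_restrict_withDensity hk, withDensity_apply _ MeasurableSet.univ,
    Measure.restrict_univ, setLIntegral_Ici_gpd hk le_rfl]
  simp

lemma measureReal_gpdMeasure_Iio {k y : ℝ} (hk : k < 0) (hy : 0 ≤ y) :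
    (gpdMeasure k).real (Set.Iio y) = 1 - (1 - k * y) ^ (1 / k) := by
  have := isProbabilityMeasure_gpdMeasure hk
  rw [← Set.compl_Ici, probReal_compl_eq_one_sub measurableSet_Ici, Measure.real,
    gpdMeasure_Ici hk hy, ENNReal.toReal_ofReal]
  exact Real.rpow_nonneg (by nlinarith) _

lemma integrable_and_integral_gpdMeasure {k : ℝ} (hk₁ : -1 < k) (hk₂ : k < 0) :
    Integrable (fun x : ℝ => x) (gpdMeasure k) ∧ ∫ x, x ∂gpdMeasure k = 1 / (k + 1) := by
  set F : ℝ → ℝ := fun x =>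
    -(1 / k) * ((1 - k * x) ^ (1 / k) - (1 - k * x) ^ (1 / k + 1))
      - 1 / (k + 1) * (1 - k * x) ^ (1 / k + 1) with hF
  have hpos : ∀ x ∈ Set.Ici (0 : ℝ), 0 < 1 - k * x := fun x hx => by
    nlinarith [Set.mem_Ici.1 hx]
  have hk0 : k + 1 ≠ 0 := by linarith
  have hexp : 1 / k + 1 < 0 := by
    rw [div_add_one hk₂.ne]; exact div_neg_of_pos_of_neg (by linarith) hk₂
  have hderiv : ∀ x ∈ Set.Ici (0 : ℝ),
      HasDerivAt F ((1 - k * x) ^ ((1 - k) / k) * x) x := fun x hx => by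
    have h₁ := hasDerivAt_one_sub_mul_rpow (1 / k) (hpos x hx)
    have h₂ := hasDerivAt_one_sub_mul_rpow (1 / k + 1) (hpos x hx)
    refine (((h₁.sub h₂).const_mul (-(1 / k))).sub
      (h₂.const_mul (1 / (k + 1)))).congr_deriv ?_
    have hsplit : (1 - k * x) ^ (1 / k) = (1 - k * x) ^ (1 / k - 1) * (1 - k * x) := by
      rw [← Real.rpow_add_one (hpos x hx).ne', sub_add_cancel]
    rw [sub_div, div_self hk₂.ne, add_sub_cancel_right, hsplit]
    have := hk₂.ne
    field_simp
    ring
  have hnn : ∀ x ∈ Set.Ioi (0 : ℝ), 0 ≤ (1 - k * x) ^ ((1 - k) / k) * x := fun x hx =>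
    mul_nonneg (Real.rpow_nonneg (hpos x (Set.Ioi_subset_Ici_self hx)).le _) (le_of_lt hx)
  have hlim : Tendsto F atTop (nhds 0) := by
    have h₁ := tendsto_one_sub_mul_rpow_atTop hk₂ (one_div_neg.2 hk₂)
    have h₂ := tendsto_one_sub_mul_rpow_atTop hk₂ hexp
    simpa [hF] using ((h₁.sub h₂).const_mul (-(1 / k))).sub (h₂.const_mul (1 / (k + 1)))
  have hmeas : Measurable fun x : ℝ => ENNReal.ofReal ((1 - k * x) ^ ((1 - k) / k)) := by
    fun_prop
  have hcongr : ∀ x ∈ Set.Ioi (0 : ℝ),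
      (ENNReal.ofReal ((1 - k * x) ^ ((1 - k) / k))).toReal • x =
        (1 - k * x) ^ ((1 - k) / k) * x := fun x hx => by
    rw [ENNReal.toReal_ofReal (Real.rpow_nonneg (hpos x (Set.Ioi_subset_Ici_self hx)).le _),
      smul_eq_mul]
  rw [gpdMeasure_eq_restrict_withDensity hk₂, Measure.restrict_congr_set Ioi_ae_eq_Ici.symm,
    integrable_withDensity_iff_integrable_smul' hmeas (ae_of_all _ fun _ => ENNReal.ofReal_lt_top),
    integral_withDensity_eq_integral_toReal_smul hmeas
      (ae_of_all _ fun _ => ENNReal.ofReal_lt_top)]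
  refine ⟨(integrableOn_congr_fun hcongr measurableSet_Ioi).2
    (integrableOn_Ioi_deriv_of_nonneg' hderiv hnn hlim), ?_⟩
  rw [setIntegral_congr_fun measurableSet_Ioi hcongr,
    integral_Ioi_of_hasDerivAt_of_nonneg' hderiv hnn hlim]
  simp [hF]

/-- The weak law of large numbers for finite product measures. -/
lemma tendsto_measureReal_pi_sampleMean {μ : Measure ℝ} [IsProbabilityMeasure μ]
    (hμ : Integrable (fun x : ℝ => x) μ) {ε : ℝ} (hε : 0 < ε) :
    Tendsto (fun n : ℕ => (Measure.pi fun _ : Fin n => μ).real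
      {x | ε ≤ |sampleMean x - ∫ x, x ∂μ|}) atTop (nhds 0) := by
  set P : Measure (ℕ → ℝ) := Measure.infinitePi fun _ => μ
  have hmp : ∀ i, MeasurePreserving (Function.eval i) P μ :=
    fun i => measurePreserving_eval_infinitePi (fun _ : ℕ => μ) i
  have hindep : iIndepFun (fun (i : ℕ) (ω : ℕ → ℝ) => ω i) P :=
    iIndepFun_infinitePi (X := fun _ x => x) fun _ => measurable_id
  have hlaw := strong_law_ae_real (μ := P) (fun i ω => ω i)
    ((hmp 0).integrable_comp_of_integrable hμ) (fun i j hij => hindep.indepFun hij)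
    fun i => ⟨(hmp i).aemeasurable, (hmp 0).aemeasurable,
      (hmp i).map_eq.trans (hmp 0).map_eq.symm⟩
  have hmean : ∫ ω, ω 0 ∂P = ∫ x, x ∂μ := by
    rw [← (hmp 0).map_eq, integral_map (hmp 0).aemeasurable (by fun_prop)]
  rw [hmean] at hlaw
  have hmeas := tendstoInMeasure_of_tendsto_ae
    (fun n => (by fun_prop : AEStronglyMeasurable
      (fun ω : ℕ → ℝ => (∑ i ∈ Finset.range n, ω i) / (n : ℝ)) P)) hlaw
  refine (tendstoInMeasure_iff_measureReal_dist.1 hmeas ε hε).congr fun n => ?_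
  have hmap : P.map (fun ω (i : Fin n) => ω i) = Measure.pi fun _ : Fin n => μ := by
    rw [Measure.map_infinitePi_infinitePi_of_inj (P := fun _ : ℕ => μ) Fin.val_injective,
      Measure.infinitePi_eq_pi]
  have hset : MeasurableSet {x : Fin n → ℝ | ε ≤ |sampleMean x - ∫ x, x ∂μ|} := by
    unfold sampleMean
    exact measurableSet_le (by fun_prop) (by fun_prop)
  rw [← hmap, map_measureReal_apply (by fun_prop) hset]
  simp [sampleMean, Real.dist_eq, Finset.sum_range]

lemma sampleMean_le_sampleMax {n : ℕ} (hn : n ≠ 0) (x : Fin n → ℝ) :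
    sampleMean x ≤ sampleMax x := by
  rw [sampleMean, div_le_iff₀ (by positivity), mul_comm]
  simpa using Finset.sum_le_card_nsmul Finset.univ x (sampleMax x) fun i _ =>
    le_ciSup (Set.finite_range x).bddAbove i

lemma measureReal_iidGPD_le_sampleMax {k y : ℝ} (hk : k < 0) (hy : 0 ≤ y) {n : ℕ}
    (hn : n ≠ 0) :
    (iidGPD n k).real {x | y ≤ sampleMax x} = 1 - (1 - (1 - k * y) ^ (1 / k)) ^ n := by
  have := isProbabilityMeasure_gpdMeasure hk
  have : NeZero n := ⟨hn⟩
  have hset : {x : Fin n → ℝ | y ≤ sampleMax x} = (Set.univ.pi fun _ => Set.Iio y)ᶜ := by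
    ext x
    have hlt : sampleMax x < y ↔ ∀ i, x i < y := by
      refine ⟨fun h i => (le_ciSup (Set.finite_range x).bddAbove i).trans_lt h, fun h => ?_⟩
      obtain ⟨i, hi⟩ := exists_eq_ciSup_of_finite (f := x)
      exact hi.symm.trans_lt (h i)
    simp [← not_lt, hlt]
  rw [hset, iidGPD, probReal_compl_eq_one_sub
    (MeasurableSet.univ_pi fun _ => measurableSet_Iio), Measure.real, Measure.pi_pi,
    Finset.prod_const, ENNReal.toReal_pow, ← Measure.real, measureReal_gpdMeasure_Iio hk hy]
  simp

lemma tendsto_measureReal_iidGPD_le_sampleMax {k s : ℝ} (hk : k < 0) (hs : 0 < s) :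
    Tendsto (fun n : ℕ => (iidGPD n k).real {x | (n : ℝ) ^ (-k) * s ≤ sampleMax x}) atTop
      (nhds (1 - Real.exp (-(-k * s) ^ (1 / k)))) := by
  have hks : 0 < -k * s := mul_pos (neg_pos.2 hk) hs
  have hpow : Tendsto (fun n : ℕ => (n : ℝ) ^ k) atTop (nhds 0) := by
    simpa [Function.comp_def] using
      (tendsto_rpow_neg_atTop (neg_pos.2 hk)).comp tendsto_natCast_atTop_atTop
  have hbase : Tendsto (fun n : ℕ => -((n : ℝ) ^ k + -k * s) ^ (1 / k)) atTop
      (nhds (-(-k * s) ^ (1 / k))) := by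
    have h : Tendsto (fun n : ℕ => (n : ℝ) ^ k + -k * s) atTop (nhds (-k * s)) := by
      simpa using hpow.add_const (-k * s)
    exact (h.rpow_const (Or.inl hks.ne')).neg
  have hlim := (Real.tendsto_one_add_pow_exp_of_tendsto
    (g := fun n : ℕ => -(1 - k * ((n : ℝ) ^ (-k) * s)) ^ (1 / k)) (hbase.congr' ?_)).const_sub 1
  · refine hlim.congr' ?_
    filter_upwards [eventually_ne_atTop 0] with n hn
    rw [measureReal_iidGPD_le_sampleMax hk (by positivity) hn, ← sub_eq_add_neg]
  · filter_upwards [eventually_ne_atTop 0] with n hn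
    have hn' : (0 : ℝ) < n := by positivity
    have hfac : (n : ℝ) ^ k + -k * s = (n : ℝ) ^ k * (1 - k * ((n : ℝ) ^ (-k) * s)) := by
      have : (n : ℝ) ^ k * (n : ℝ) ^ (-k) = 1 := by rw [← Real.rpow_add hn']; simp
      linear_combination k * s * this
    have hnn : 0 ≤ 1 - k * ((n : ℝ) ^ (-k) * s) := by
      nlinarith [mul_pos (Real.rpow_pos_of_pos hn' (-k)) hks]
    rw [hfac, Real.mul_rpow (by positivity) hnn, ← Real.rpow_mul hn'.le,
      mul_one_div_cancel hk.ne, Real.rpow_one, mul_neg]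

/-- For a GPD sample with shape `−1 < k < 0`, `n^{−k}·τ_n` converges in distribution to a
Weibull variable of shape `−1/k` and scale `−k/(k+1)`: for every `t > 0`,
`P(n^{−k}·τ_n ≤ t) → 1 − exp(−(t·(k+1)/(−k))^{−1/k})`. -/
theorem tau_asymptotics_gpd_neg_shape
    (k : ℝ) (hk₁ : -1 < k) (hk₂ : k < 0) :
    ∀ t : ℝ, 0 < t →
      Tendsto
        (fun n : ℕ => iidGPD n k {x | (n : ℝ) ^ (-k) * tau x ≤ t})
        atTop
        (nhds (ENNReal.ofReal
          (1 - Real.exp (-((t * (k + 1) / (-k)) ^ (-1 / k)))))) := by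
  intro t ht
  have hprob := isProbabilityMeasure_gpdMeasure hk₂
  have hprob_pi : ∀ n, IsProbabilityMeasure (iidGPD n k) := fun n => by
    unfold iidGPD; infer_instance
  obtain ⟨hint, hmean⟩ := integrable_and_integral_gpdMeasure hk₁ hk₂
  set m : ℝ := 1 / (k + 1) with hm
  have hm0 : 0 < m := one_div_pos.2 (by linarith)
  set G : ℝ → ℝ := fun a => 1 - Real.exp (-(-k * (a / t)) ^ (1 / k)) with hG
  have hGm : 1 - Real.exp (-((t * (k + 1) / (-k)) ^ (-1 / k))) = G m := by
    have hinv : -k * (m / t) = (t * (k + 1) / (-k))⁻¹ := by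
      rw [hm]; field_simp
    rw [hG]
    dsimp only
    rw [hinv, Real.inv_rpow, ← Real.rpow_neg, neg_div] <;>
      exact div_nonneg (mul_nonneg ht.le (by linarith)) (by linarith)
  have hGcont : ContinuousAt G m := by
    have : -k * (m / t) ≠ 0 := (mul_pos (neg_pos.2 hk₂) (div_pos hm0 ht)).ne'
    refine continuousAt_const.sub (Real.continuous_exp.continuousAt.comp
      (ContinuousAt.neg (ContinuousAt.rpow_const ?_ (Or.inl this))))
    fun_prop
  have hmax : ∀ a, 0 < a → Tendsto (fun n : ℕ =>
      (iidGPD n k).real {x | (n : ℝ) ^ (-k) * (a / t) ≤ sampleMax x}) atTop (nhds (G a)) :=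
    fun a ha => tendsto_measureReal_iidGPD_le_sampleMax hk₂ (div_pos ha ht)
  have hdev : ∀ ε, 0 < ε → Tendsto (fun n : ℕ =>
      (iidGPD n k).real {x | ε ≤ |sampleMean x - m|}) atTop (nhds 0) := fun ε hε => by
    simpa only [hmean, iidGPD] using tendsto_measureReal_pi_sampleMean hint hε
  rw [hGm]
  suffices h : Tendsto (fun n : ℕ => (iidGPD n k).real {x | (n : ℝ) ^ (-k) * tau x ≤ t}) atTop
      (nhds (G m)) by
    simpa using ENNReal.tendsto_ofReal h
  rw [Metric.tendsto_nhds]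
  intro δ hδ
  obtain ⟨η, hη, hGη⟩ := Metric.continuousAt_iff.1 hGcont (δ / 3) (by positivity)
  set ε := min (η / 2) (m / 2) with hε
  have hε0 : 0 < ε := by positivity
  have hεη : ε < η := (min_le_left _ _).trans_lt (by linarith)
  have hεm : ε < m := (min_le_right _ _).trans_lt (by linarith)
  have hG₁ := hGη (show dist (m - ε) m < η by simpa [Real.dist_eq, abs_of_pos hε0])
  have hG₂ := hGη (show dist (m + ε) m < η by simpa [Real.dist_eq, abs_of_pos hε0])
  filter_upwards [eventually_ne_atTop 0,
    Metric.tendsto_nhds.1 (hdev ε hε0) (δ / 3) (by positivity),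
    Metric.tendsto_nhds.1 (hmax (m - ε) (by linarith)) (δ / 3) (by positivity),
    Metric.tendsto_nhds.1 (hmax (m + ε) (by linarith)) (δ / 3) (by positivity)]
    with n hn hD hL hU
  have hpow : 0 < (n : ℝ) ^ (-k) := by positivity
  have hupper : (iidGPD n k).real {x | (n : ℝ) ^ (-k) * tau x ≤ t} ≤
      (iidGPD n k).real {x | ε ≤ |sampleMean x - m|} +
        (iidGPD n k).real {x | (n : ℝ) ^ (-k) * ((m - ε) / t) ≤ sampleMax x} := by
    refine (measureReal_mono fun x hx => ?_).trans (measureReal_union_le _ _)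
    refine or_iff_not_imp_left.2 fun hx' => ?_
    rw [Set.mem_ofPred_eq, not_le] at hx'
    obtain ⟨hlo, -⟩ := abs_lt.1 hx'
    have hpos : 0 < sampleMax x := by linarith [sampleMean_le_sampleMax hn x]
    rw [Set.mem_ofPred_eq, tau, ← mul_div_assoc, div_le_iff₀ hpos] at hx
    rw [Set.mem_ofPred_eq, ← mul_div_assoc, div_le_iff₀ ht]
    nlinarith
  have hlower : (iidGPD n k).real {x | (n : ℝ) ^ (-k) * ((m + ε) / t) ≤ sampleMax x} ≤
      (iidGPD n k).real {x | ε ≤ |sampleMean x - m|} +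
        (iidGPD n k).real {x | (n : ℝ) ^ (-k) * tau x ≤ t} := by
    refine (measureReal_mono fun x hx => ?_).trans (measureReal_union_le _ _)
    refine or_iff_not_imp_left.2 fun hx' => ?_
    rw [Set.mem_ofPred_eq, not_le] at hx'
    obtain ⟨-, hhi⟩ := abs_lt.1 hx'
    rw [Set.mem_ofPred_eq] at hx
    have hpos : 0 < sampleMax x := lt_of_lt_of_le (by positivity) hx
    rw [← mul_div_assoc, div_le_iff₀ ht] at hx
    rw [Set.mem_ofPred_eq, tau, ← mul_div_assoc, div_le_iff₀ hpos]
    nlinarith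
  rw [Real.dist_eq, abs_lt] at *
  constructor <;> linarith
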